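/- Let q ≥ 2 be an integer and let G be a bipartite egr(2(q³+q²+q+1), q²+q+1, 4, q³+q²) graph. Then the characteristic polynomial over ℝ of the adjacency matrix of G equals (X−(q²+q+1))·(X+(q²+q+1))·(X²−q²)^{q³+q²+q}; that is, the spectrum of G is {−(q²+q+1) with multiplicity 1, −q with multiplicity q³+q²+q, q with multiplicity q³+q²+q, q²+q+1 with multiplicity 1}. -/

import Mathlib

/-!
Let `m = q³ + q² + q + 1` be the size of a colour class, `k = q² + q + 1` the degree and `A` the
adjacency matrix, so that `(A²)_{uw}` counts the common neighbours of `u` and `w`. For an edge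
`uv`, each 4-cycle through it is a walk of length 3 from `v` to `u` that does not backtrack, whence
`(A³)_{vu} = λ + 2k - 1` with `λ = q³ + q²`. Summing over the neighbours of `u` gives
`∑_w (A²)_{uw}² = (A⁴)_{uu} = k(λ + 2k - 1)`, while `∑_w (A²)_{uw} = k²` and `(A²)_{uu} = k`.
For these parameters the numbers of common neighbours of `u` with the other `m - 1` vertices of its
class therefore have variance zero, so each equals `q + 1`: the graph is the incidence graph of a
symmetric design, and `A² = q² I + (q + 1) U Uᵀ`, where the two columns of `U` are the indicators
of the colour classes (`adjMatrix_sq`).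

Since the graph is bipartite, `A` is similar to `-A` (`det_scalar_add`), so the characteristic
polynomial `χ` satisfies `χ(t)² = det (t - A) det (t + A) = det (t² - A²)`. The latter is computed
from `Uᵀ U = m I`, which gives the spectrum of `U Uᵀ`. The claimed polynomial has the same square,
and both are monic, so they agree.
-/

open SimpleGraph

/-- `G` is an edge-girth-regular graph with parameters `(n, k, g, lam)`:
a finite simple graph on `n` vertices, `k`-regular, of girth `g`, in which every
edge lies on exactly `lam` cycles of length `g` (each such cycle corresponds to
exactly two closed walks based at an endpoint of the edge and traversing it). -/
def SimpleGraph.IsEGR {V : Type*} (G : SimpleGraph V) (n k g lam : ℕ) : Prop :=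
  Finite V ∧ Nat.card V = n ∧
    (∀ v : V, (G.neighborSet v).ncard = k) ∧
    G.egirth = (g : ℕ∞) ∧
    ∀ u v : V, G.Adj u v →
      Nat.card {p : G.Walk u u // p.IsCycle ∧ p.length = g ∧ s(u, v) ∈ p.edges} = 2 * lam

/-- The number of closed walks of length `l` based at `v`. -/
noncomputable def SimpleGraph.closedWalkCount {V : Type*} (G : SimpleGraph V) (v : V) (l : ℕ) : ℕ :=
  Nat.card {p : G.Walk v v // p.length = l}

/-- The number of cycle-free closed walks of length `l` based at `v`,
i.e. closed walks whose traversed edges form an acyclic subgraph. -/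
noncomputable def SimpleGraph.cycleFreeClosedWalkCount {V : Type*} (G : SimpleGraph V) (v : V)
    (l : ℕ) : ℕ :=
  Nat.card {p : G.Walk v v // p.length = l ∧ p.toSubgraph.coe.IsAcyclic}

/-- A closed 4-walk at `u` that is a cycle through the edge `uv` is `u v w x u` or its reverse
`u x w v u`, where `v w x u` is a walk with `w ≠ u` and `x ≠ v`. -/
lemma card_cycles {V : Type*} (G : SimpleGraph V) [Finite V] (u v : V) (huv : G.Adj u v) :
    Nat.card {p : G.Walk u u // p.IsCycle ∧ p.length = 4 ∧ s(u, v) ∈ p.edges} =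
    2 * Nat.card {z : V × V // (z.1 ≠ u ∧ z.2 ≠ v) ∧ G.Adj v z.1 ∧ G.Adj z.1 z.2 ∧ G.Adj z.2 u} := by
  let T := {z : V × V // (z.1 ≠ u ∧ z.2 ≠ v) ∧ G.Adj v z.1 ∧ G.Adj z.1 z.2 ∧ G.Adj z.2 u}
  let f : T ⊕ T → {p : G.Walk u u // p.IsCycle ∧ p.length = 4 ∧ s(u, v) ∈ p.edges} := fun t =>
    match t with
    | .inl ⟨z, hz⟩ => ⟨.cons huv (.cons hz.2.1 (.cons hz.2.2.1 (.cons hz.2.2.2 .nil))), by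
        obtain ⟨⟨h1, h2⟩, h3, h4, h5⟩ := hz
        have := huv.ne; have := h3.ne; have := h4.ne; have := h5.ne
        refine ⟨?_, rfl, by simp⟩
        simp [Walk.isCycle_def, Walk.isTrail_def]
        grind⟩
    | .inr ⟨z, hz⟩ => ⟨.cons hz.2.2.2.symm (.cons hz.2.2.1.symm (.cons hz.2.1.symm (.cons huv.symm .nil))), by
        obtain ⟨⟨h1, h2⟩, h3, h4, h5⟩ := hz
        have := huv.ne; have := h3.ne; have := h4.ne; have := h5.ne
        refine ⟨?_, rfl, by simp⟩
        simp [Walk.isCycle_def, Walk.isTrail_def]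
        grind⟩
  have hf : Function.Bijective f := by
    constructor
    · rintro (⟨⟨a, b⟩, hz⟩ | ⟨⟨a, b⟩, hz⟩) (⟨⟨c, d⟩, hz'⟩ | ⟨⟨c, d⟩, hz'⟩) h <;>
        have h := congrArg (fun p => p.1.support) h <;> simp [f] at h <;> grind
    · rintro ⟨p, hp, hl, he⟩
      match p, hl with
      | .cons (v := a) h1 (.cons (v := b) h2 (.cons (v := c) h3 (.cons h4 .nil))), hl =>
        simp [Walk.isCycle_def, Walk.isTrail_def] at hp he
        have := h1.ne; have := h2.ne; have := h3.ne; have := h4.ne; have := huv.ne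
        by_cases hav : a = v
        · subst hav
          exact ⟨.inl ⟨(b, c), by grind⟩, rfl⟩
        · obtain rfl : c = v := by grind
          exact ⟨.inr ⟨(b, a), ⟨by grind, by grind⟩, h3.symm, h2.symm, h1.symm⟩, rfl⟩
  rw [← Nat.card_eq_of_bijective f hf, Nat.card_sum]
  ring

open Matrix Polynomial

lemma sum_adjMatrix_row {V : Type*} [Fintype V] (G : SimpleGraph V) [DecidableRel G.Adj] {k : ℕ}
    (hk : G.IsRegularOfDegree k) (w : V) : ∑ x, G.adjMatrix ℝ w x = k := by
  have := adjMatrix_mulVec_const_apply_of_regular (α := ℝ) (a := 1) hk (v := w)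
  simpa [Matrix.mulVec, dotProduct] using this

/-- Of the walks `v w x u` of length 3 between the ends of an edge, `lam` close up to a 4-cycle; the
backtracking ones have `w = u` (`k` of them) or `x = v` (`k` of them), and one has both. -/
lemma adjMatrix_cube_apply {V : Type*} [Fintype V] [DecidableEq V] (G : SimpleGraph V) [DecidableRel G.Adj]
    {k lam : ℕ} (hk : G.IsRegularOfDegree k) (u v : V) (huv : G.Adj u v)
    (h : Nat.card {p : G.Walk u u // p.IsCycle ∧ p.length = 4 ∧ s(u, v) ∈ p.edges} = 2 * lam) :
    (G.adjMatrix ℝ * (G.adjMatrix ℝ * G.adjMatrix ℝ)) v u = lam + 2 * k - 1 := by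
  rw [card_cycles G u v huv] at h
  have h' : Nat.card {z : V × V // (z.1 ≠ u ∧ z.2 ≠ v) ∧ G.Adj v z.1 ∧ G.Adj z.1 z.2 ∧ G.Adj z.2 u}
      = lam := by omega
  have hdeg := sum_adjMatrix_row G hk
  have hsum : (lam : ℝ) = ∑ w, ∑ x, if (w ≠ u ∧ x ≠ v) ∧ G.Adj v w ∧ G.Adj w x ∧ G.Adj x u
      then (1 : ℝ) else 0 := by
    rw [← h', Nat.card_eq_fintype_card, Fintype.card_subtype, ← Fintype.sum_prod_type'
      (f := fun w x => if (w ≠ u ∧ x ≠ v) ∧ G.Adj v w ∧ G.Adj w x ∧ G.Adj x u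
        then (1 : ℝ) else 0), Finset.sum_boole]
  have hpt (w x : V) : (if (w ≠ u ∧ x ≠ v) ∧ G.Adj v w ∧ G.Adj w x ∧ G.Adj x u
      then (1 : ℝ) else 0) = G.adjMatrix ℝ v w * (G.adjMatrix ℝ w x * G.adjMatrix ℝ x u)
        - (if w = u then G.adjMatrix ℝ u x else 0) - (if x = v then G.adjMatrix ℝ v w else 0)
        + (if w = u then if x = v then 1 else 0 else 0) := by
    have h1 := huv.symm
    simp only [adjMatrix_apply]
    by_cases hw : w = u
    · subst hw
      by_cases hx : x = v
      · subst hx; simp [h1, huv]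
      · simp only [hx, h1, G.adj_comm x w]; split_ifs <;> simp_all
    · by_cases hx : x = v
      · subst hx; simp only [hw, h1, G.adj_comm w x]; split_ifs <;> simp_all
      · simp only [hw, hx, ne_eq, not_false_eq_true, true_and, if_false]
        split_ifs <;> simp_all
  simp_rw [hpt, Finset.sum_add_distrib, Finset.sum_sub_distrib] at hsum
  have e1 : ∑ w, ∑ x, (if w = u then G.adjMatrix ℝ u x else 0) = k := by
    rw [Finset.sum_comm]; simp only [Finset.sum_ite_eq', Finset.mem_univ, if_true, hdeg]
  have e2 : ∑ w, ∑ x, (if x = v then G.adjMatrix ℝ v w else 0) = k := by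
    simp only [Finset.sum_ite_eq', Finset.mem_univ, if_true, hdeg]
  have e3 : ∑ w, ∑ x, (if w = u then if x = v then (1 : ℝ) else 0 else 0) = 1 := by
    rw [Finset.sum_comm]; simp
  rw [e1, e2, e3] at hsum
  have e4 : (G.adjMatrix ℝ * (G.adjMatrix ℝ * G.adjMatrix ℝ)) v u =
      ∑ w, ∑ x, G.adjMatrix ℝ v w * (G.adjMatrix ℝ w x * G.adjMatrix ℝ x u) := by
    simp only [Matrix.mul_apply, Finset.mul_sum]
  rw [e4]; linarith

/-- The `V × 2` matrix whose columns are the indicator vectors of the two colour classes. -/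
def classMatrix {V : Type*} {G : SimpleGraph V} (C : G.Coloring (Fin 2)) : Matrix V (Fin 2) ℝ :=
  fun u i => if C u = i then 1 else 0

lemma classMatrix_mul_transpose {V : Type*} {G : SimpleGraph V} (C : G.Coloring (Fin 2)) (u w : V) :
    (classMatrix C * (classMatrix C)ᵀ) u w = if C u = C w then 1 else 0 := by
  simp [classMatrix, Matrix.mul_apply, eq_comm]

/-- The two colour classes of a regular bipartite graph of positive degree have equal size, because
both are met by every edge exactly once. -/
lemma card_class {V : Type*} [Fintype V] (G : SimpleGraph V) [DecidableRel G.Adj]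
    {k m : ℕ} (hk : G.IsRegularOfDegree k) (hk0 : k ≠ 0)
    (hV : Fintype.card V = 2 * m) (C : G.Coloring (Fin 2)) (i : Fin 2) :
    (Finset.univ.filter fun u => C u = i).card = m := by
  have hb : G.IsBipartiteWith ((Finset.univ.filter fun u => C u = 0 : Finset V) : Set V)
      ((Finset.univ.filter fun u => C u = 1 : Finset V) : Set V) := by
    constructor
    · rw [Set.disjoint_left]; intro x; simp; grind
    · intro a b hab
      have := C.valid hab
      simp; grind
  have h1 := isBipartiteWith_sum_degrees_eq hb
  simp only [hk.degree_eq, Finset.sum_const, smul_eq_mul] at h1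
  have h1 := Nat.eq_of_mul_eq_mul_right (Nat.pos_of_ne_zero hk0) h1
  have h2 := Finset.card_eq_sum_card_fiberwise (s := (Finset.univ : Finset V))
    (t := (Finset.univ : Finset (Fin 2))) (f := C) (by simp)
  rw [Fin.sum_univ_two, Finset.card_univ, hV] at h2
  fin_cases i <;> simp <;> omega

lemma transpose_mul_classMatrix {V : Type*} [Fintype V] {G : SimpleGraph V}
    (C : G.Coloring (Fin 2)) {m : ℕ}
    (hm : ∀ i, (Finset.univ.filter fun u => C u = i).card = m) :
    (classMatrix C)ᵀ * classMatrix C = Matrix.diagonal fun _ => (m : ℝ) := by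
  ext i j
  by_cases hij : i = j
  · subst hij
    simp only [classMatrix, Matrix.mul_apply, Matrix.transpose_apply, Matrix.diagonal_apply_eq,
      ← hm i, ← Finset.sum_boole]
    exact Finset.sum_congr rfl fun u _ => by split_ifs <;> simp
  · simp only [Matrix.mul_apply, classMatrix, Matrix.transpose_apply, Matrix.diagonal_apply_ne _ hij]
    apply Finset.sum_eq_zero
    grind

/-- Two distinct vertices have exactly `q + 1` common neighbours if they have the same colour, and
none otherwise; in matrix form, `A² = q² I + (q + 1) U Uᵀ`. -/
lemma adjMatrix_sq {V : Type*} [Fintype V] [DecidableEq V] (G : SimpleGraph V) [DecidableRel G.Adj]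
    {q : ℕ} (hV : Fintype.card V = 2 * (q ^ 3 + q ^ 2 + q + 1))
    (hk : G.IsRegularOfDegree (q ^ 2 + q + 1)) (C : G.Coloring (Fin 2))
    (hcyc : ∀ u v, G.Adj u v → Nat.card {p : G.Walk u u // p.IsCycle ∧ p.length = 4 ∧
      s(u, v) ∈ p.edges} = 2 * (q ^ 3 + q ^ 2)) :
    G.adjMatrix ℝ * G.adjMatrix ℝ =
      Matrix.scalar V ((q : ℝ) ^ 2) + ((q : ℝ) + 1) • (classMatrix C * (classMatrix C)ᵀ) := by
  set A := G.adjMatrix ℝ with hA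
  have hAs (u w : V) : A u w = A w u := by simp [hA, G.adj_comm]
  have hdeg (w : V) : ∑ x, A w x = (q : ℝ) ^ 2 + q + 1 := by
    rw [hA, sum_adjMatrix_row G hk w]; push_cast; ring
  have hBs (u w : V) : (A * A) u w = (A * A) w u := by
    simp only [Matrix.mul_apply]
    exact Finset.sum_congr rfl fun x _ => by rw [hAs u x, hAs x w, mul_comm]
  have hdiag (u : V) : (A * A) u u = (q : ℝ) ^ 2 + q + 1 := by
    rw [← hdeg u, Matrix.mul_apply]
    exact Finset.sum_congr rfl fun x _ => by
      rw [hAs x u]; simp [hA]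
  have hrow (u : V) : ∑ w, (A * A) u w = ((q : ℝ) ^ 2 + q + 1) ^ 2 := by
    simp only [Matrix.mul_apply]
    rw [Finset.sum_comm]
    simp only [← Finset.mul_sum, hdeg, ← Finset.sum_mul]
    ring
  have hsq (u : V) : ∑ w, (A * A) u w ^ 2 =
      ((q : ℝ) ^ 2 + q + 1) * (q ^ 3 + q ^ 2 + 2 * (q ^ 2 + q + 1) - 1) := by
    have e : ∑ w, (A * A) u w ^ 2 = (A * (A * (A * A))) u u := by
      rw [← Matrix.mul_assoc, Matrix.mul_apply (M := A * A)]
      exact Finset.sum_congr rfl fun w _ => by rw [hBs w u, sq]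
    rw [e, Matrix.mul_apply, ← hdeg u, Finset.sum_mul]
    refine Finset.sum_congr rfl fun v _ => ?_
    by_cases huv : G.Adj u v
    · rw [adjMatrix_cube_apply G hk u v huv (hcyc u v huv)]
      push_cast; rw [hdeg]
    · simp [hA, huv]
  have hoff (u w : V) (huw : C u ≠ C w) : (A * A) u w = 0 := by
    rw [Matrix.mul_apply]
    refine Finset.sum_eq_zero fun x _ => ?_
    by_cases h1 : G.Adj u x
    · by_cases h2 : G.Adj x w
      · have := C.valid h1; have := C.valid h2; grind
      · simp [hA, h2]
    · simp [hA, h1]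
  have hcls (u : V) : ∑ w, (if C u = C w then (1 : ℝ) else 0) = q ^ 3 + q ^ 2 + q + 1 := by
    have := card_class G hk (by positivity) hV C (C u)
    simp only [eq_comm (a := C u), Finset.sum_boole, this]
    push_cast; ring
  ext u w
  -- The entries of the difference of the two sides in row `u` have square sum zero.
  let D : V → ℝ := fun w => (A * A) u w - (q + 1) * (if C u = C w then 1 else 0)
    - (if u = w then (q : ℝ) ^ 2 else 0)
  have hD : ∑ w, D w ^ 2 = 0 := by
    have e (w : V) : D w ^ 2 = (A * A) u w ^ 2 - 2 * (q + 1) * (A * A) u w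
        + (q + 1) ^ 2 * (if C u = C w then (1 : ℝ) else 0)
        + (if u = w then ((q : ℝ) ^ 4 - 2 * q ^ 2 * (A * A) u w + 2 * q ^ 2 * (q + 1)) else 0) := by
      simp only [D]
      by_cases hc : C u = C w
      · by_cases huw : u = w
        · simp only [huw, if_true]; ring
        · simp only [hc, huw, if_true, if_false]; ring
      · have huw : u ≠ w := fun h => hc (by rw [h])
        simp only [hc, huw, hoff u w hc, if_false]; ring
    simp_rw [e, Finset.sum_add_distrib, Finset.sum_sub_distrib, ← Finset.mul_sum, hsq, hrow, hcls,
      Finset.sum_ite_eq, Finset.mem_univ, if_true, hdiag]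
    ring
  have hDw : D w = 0 := by
    have := (Finset.sum_eq_zero_iff_of_nonneg fun w _ => sq_nonneg (D w)).1 hD w (Finset.mem_univ w)
    exact pow_eq_zero_iff two_ne_zero |>.1 this
  rw [Matrix.add_apply, Matrix.smul_apply, classMatrix_mul_transpose, Matrix.scalar_apply,
    Matrix.diagonal_apply, smul_eq_mul]
  simp only [D] at hDw
  linarith

/-- Conjugation by the diagonal matrix of signs of the colour classes turns `A` into `-A`. -/
lemma det_scalar_add {V : Type*} [Fintype V] [DecidableEq V] (G : SimpleGraph V) [DecidableRel G.Adj]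
    (C : G.Coloring (Fin 2)) (t : ℝ) :
    (Matrix.scalar V t + G.adjMatrix ℝ).det = (Matrix.scalar V t - G.adjMatrix ℝ).det := by
  let s : V → ℝ := fun u => if C u = 0 then 1 else -1
  have hs (u : V) : s u * s u = 1 := by simp only [s]; split_ifs <;> norm_num
  have hS : (Matrix.diagonal s).det * (Matrix.diagonal s).det = 1 := by
    rw [← Matrix.det_mul, Matrix.diagonal_mul_diagonal]; simp [hs]
  have e : Matrix.scalar V t + G.adjMatrix ℝ =
      Matrix.diagonal s * (Matrix.scalar V t - G.adjMatrix ℝ) * Matrix.diagonal s := by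
    ext u w
    rw [Matrix.mul_diagonal, Matrix.diagonal_mul]
    simp only [Matrix.add_apply, Matrix.sub_apply, Matrix.scalar_apply, Matrix.diagonal_apply,
      adjMatrix_apply]
    by_cases huw : u = w
    · subst huw
      simp only [SimpleGraph.irrefl, if_true, if_false]
      linear_combination -t * hs u
    · simp only [huw, if_false]
      by_cases h : G.Adj u w
      · have := C.valid h
        simp only [h, if_true, s]
        split_ifs <;> grind
      · simp [h]
  rw [e, Matrix.det_mul, Matrix.det_mul]
  linear_combination (Matrix.scalar V t - G.adjMatrix ℝ).det * hS

/-- Let `q ≥ 2` and let `G` be a bipartite `egr(2(q³+q²+q+1), q²+q+1, 4, q³+q²)` graph.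
Then the characteristic polynomial of its adjacency matrix over `ℝ` is
`(X - (q²+q+1))(X + (q²+q+1))(X² - q²)^(q³+q²+q)`, i.e. the spectrum of `G` is
`{±(q²+q+1)` with multiplicity `1`, `±q` with multiplicity `q³+q²+q}`. -/
theorem pencil_egr_spectrum (q : ℕ) (hq : 2 ≤ q)
    {V : Type*} [Fintype V] [DecidableEq V] (G : SimpleGraph V) [DecidableRel G.Adj]
    (hbip : G.Colorable 2)
    (h : G.IsEGR (2 * (q ^ 3 + q ^ 2 + q + 1)) (q ^ 2 + q + 1) 4 (q ^ 3 + q ^ 2)) :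
    (G.adjMatrix ℝ).charpoly =
      (Polynomial.X - Polynomial.C ((q : ℝ) ^ 2 + q + 1)) *
        (Polynomial.X + Polynomial.C ((q : ℝ) ^ 2 + q + 1)) *
        (Polynomial.X ^ 2 - Polynomial.C ((q : ℝ) ^ 2)) ^ (q ^ 3 + q ^ 2 + q) := by
  obtain ⟨-, hV, hk, -, hcyc⟩ := h
  obtain ⟨C⟩ := hbip
  rw [Nat.card_eq_fintype_card] at hV
  have hk : G.IsRegularOfDegree (q ^ 2 + q + 1) := fun v => by
    rw [← hk v, ← Nat.card_coe_set_eq, Nat.card_eq_fintype_card, card_neighborSet_eq_degree]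
  have hA := adjMatrix_sq G hV hk C hcyc
  set U := classMatrix C with hU
  -- The nonzero spectrum of `(q + 1) U Uᵀ` is that of the scalar `2 × 2` matrix `(q + 1) Uᵀ U`.
  have hP : (((q : ℝ) + 1) • (U * Uᵀ)).charpoly = X ^ (2 * (q ^ 3 + q ^ 2 + q)) *
      (X - Polynomial.C (((q : ℝ) + 1) * (q ^ 3 + q ^ 2 + q + 1))) ^ 2 := by
    rw [← Matrix.smul_mul, Matrix.charpoly_mul_comm_of_le _ _ (by rw [hV, Fintype.card_fin]; omega),
      Matrix.mul_smul, transpose_mul_classMatrix C (card_class G hk (by positivity) hV C),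
      ← Matrix.diagonal_smul, Matrix.charpoly_diagonal, hV, Fintype.card_fin]
    simp only [Pi.smul_apply, smul_eq_mul, Finset.prod_const, Finset.card_univ, Fintype.card_fin]
    congr 2
    push_cast; rfl
  -- By the symmetry of the spectrum, `χ(t)² = det (t - A) det (t + A) = det (t² - A²)`.
  have hsq : (G.adjMatrix ℝ).charpoly ^ 2 =
      ((X - Polynomial.C ((q : ℝ) ^ 2 + q + 1)) * (X + Polynomial.C ((q : ℝ) ^ 2 + q + 1)) *
        (X ^ 2 - Polynomial.C ((q : ℝ) ^ 2)) ^ (q ^ 3 + q ^ 2 + q)) ^ 2 := by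
    refine Polynomial.funext fun t => ?_
    have e : (Matrix.scalar V t - G.adjMatrix ℝ) * (Matrix.scalar V t + G.adjMatrix ℝ) =
        Matrix.scalar V (t ^ 2 - (q : ℝ) ^ 2) - ((q : ℝ) + 1) • (U * Uᵀ) := by
      have hc : Matrix.scalar V t * G.adjMatrix ℝ = G.adjMatrix ℝ * Matrix.scalar V t :=
        (Matrix.scalar_commute t (fun _ => mul_comm _ _) _).eq
      rw [sub_mul, mul_add, mul_add, hA, hc, map_sub, sq t, map_mul]
      abel
    rw [Polynomial.eval_pow, Matrix.eval_charpoly, sq]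
    nth_rewrite 2 [← det_scalar_add G C]
    rw [← Matrix.det_mul, e, ← Matrix.eval_charpoly, hP]
    simp only [eval_mul, eval_pow, eval_sub, eval_add, eval_X, eval_C]
    ring
  have hmon : ((X - Polynomial.C ((q : ℝ) ^ 2 + q + 1)) * (X + Polynomial.C ((q : ℝ) ^ 2 + q + 1)) *
        (X ^ 2 - Polynomial.C ((q : ℝ) ^ 2)) ^ (q ^ 3 + q ^ 2 + q)).Monic :=
    ((monic_X_sub_C _).mul (monic_X_add_C _)).mul ((monic_X_pow_sub_C _ two_ne_zero).pow _)
  rcases sq_eq_sq_iff_eq_or_eq_neg.1 hsq with h | h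
  · exact h
  · have h1 := (G.adjMatrix ℝ).charpoly_monic
    rw [h, Monic, leadingCoeff_neg, hmon.leadingCoeff] at h1
    norm_num at h1
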